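/- Suppose E⟨|R_{1,2}|^p⟩_β ≤ K/N^{p/2} for all N ≥ 1 and all β ∈ [0,b], for a constant K ≥ 0. Then there is a constant K' (depending only on K, b, p) such that for all β ∈ [0,b], r > 0, and N ≥ 1: P(|F_N(β) - β²/4| ≥ r) ≤ K'/(r² N^{p/2+1}). -/

import Mathlib

open MeasureTheory ProbabilityTheory

noncomputable section

/-- Spin configuration: `±1`-valued vector from a Boolean vector. -/
def spin {N : ℕ} (s : Fin N → Bool) (i : Fin N) : ℝ := if s i then 1 else -1

/-- Overlap `R_{1,2} = N⁻¹ Σᵢ σᵢ¹ σᵢ²`. -/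
def overlap {N : ℕ} (s t : Fin N → Bool) : ℝ := (∑ i, spin s i * spin t i) / N

/-- Pure `p`-spin Hamiltonian `H_N(σ) = N^{-(p-1)/2} Σ g_{i₁,…,i_p} σ_{i₁} ⋯ σ_{i_p}`. -/
def ham (N p : ℕ) (g : (Fin p → Fin N) → ℝ) (s : Fin N → Bool) : ℝ :=
  (∑ i : Fin p → Fin N, g i * ∏ j, spin s (i j)) / (N:ℝ) ^ (((p:ℝ) - 1) / 2)

/-- Disorder measure: i.i.d. standard Gaussians `g_{i₁,…,i_p}`. -/
def disorder (N p : ℕ) : Measure ((Fin p → Fin N) → ℝ) :=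
  Measure.pi fun _ => gaussianReal 0 1

/-- Free energy `F_N(β) = N⁻¹ log Σ_σ 2^{-N} exp(β H_N(σ)/√2)`. -/
def freeEnergy (N p : ℕ) (β : ℝ) (g : (Fin p → Fin N) → ℝ) : ℝ :=
  (1 / N) * Real.log (∑ s : Fin N → Bool,
    (1 / 2 ^ N) * Real.exp (β / Real.sqrt 2 * ham N p g s))

/-- Annealed two-replica Gibbs average `E ⟨R_{1,2}^p⟩_β`. -/
def gibbsAvgRp (N p : ℕ) (β : ℝ) : ℝ :=
  ∫ g, (∑ s1 : Fin N → Bool, ∑ s2 : Fin N → Bool,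
        Real.exp (β / Real.sqrt 2 * ham N p g s1)
          * Real.exp (β / Real.sqrt 2 * ham N p g s2) * overlap s1 s2 ^ p)
      / (∑ s : Fin N → Bool, Real.exp (β / Real.sqrt 2 * ham N p g s)) ^ 2
    ∂(disorder N p)

end

/-- Annealed two-replica Gibbs average `E ⟨|R_{1,2}|^p⟩_β`. -/
noncomputable def gibbsAvgAbsRp (N p : ℕ) (β : ℝ) : ℝ :=
  ∫ g, (∑ s1 : Fin N → Bool, ∑ s2 : Fin N → Bool,
        Real.exp (β / Real.sqrt 2 * ham N p g s1)
          * Real.exp (β / Real.sqrt 2 * ham N p g s2) * |overlap s1 s2| ^ p)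
      / (∑ s : Fin N → Bool, Real.exp (β / Real.sqrt 2 * ham N p g s)) ^ 2
    ∂(disorder N p)


noncomputable abbrev gam (ι : Type) [Fintype ι] : Measure (ι → ℝ) :=
  Measure.pi fun _ => gaussianReal 0 1

instance isGaussian_gam (ι : Type) [Fintype ι] : IsGaussian (gam ι) := by
  classical
  have h1 : (gam ι).map (WithLp.toLp 2) = stdGaussian (EuclideanSpace ℝ ι) :=
    map_pi_eq_stdGaussian
  have h2 : gam ι = (stdGaussian (EuclideanSpace ℝ ι)).map
      (EuclideanSpace.equiv ι ℝ).toContinuousLinearMap := by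
    rw [← h1, Measure.map_map (by fun_prop) (by fun_prop)]
    symm
    exact Measure.map_id
  rw [h2]
  infer_instance

lemma gauss_integrable {E : Type} [NormedAddCommGroup E] [NormedSpace ℝ E] [MeasurableSpace E]
    [BorelSpace E] [SecondCountableTopology E] [CompleteSpace E] (μ : Measure E) [IsGaussian μ]
    (f : E → ℝ) (hf : Continuous f) (A B : ℝ) (h : ∀ x, |f x| ≤ A + B * ‖x‖ ^ 2) :
    Integrable f μ := by
  have h2 : MemLp id 2 μ := IsGaussian.memLp_id μ 2 (by simp)
  have h3 : Integrable (fun x : E => ‖x‖ ^ 2) μ := by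
    simpa using h2.integrable_norm_pow (by norm_num)
  refine ((integrable_const A).add (h3.const_mul B)).mono' hf.aestronglyMeasurable ?_
  exact Filter.Eventually.of_forall fun x => h x

lemma gam_rotation (ι : Type) [Fintype ι] (θ : ℝ) :
    ((gam ι).prod (gam ι)).map (ContinuousLinearMap.rotation θ) = (gam ι).prod (gam ι) := by
  apply IsGaussian.map_rotation_eq_self
  have hid : Integrable (fun x : ι → ℝ => x) (gam ι) := IsGaussian.integrable_id
  funext i
  have h1 := ContinuousLinearMap.integral_comp_comm
    (ContinuousLinearMap.proj (R := ℝ) (φ := fun _ : ι => ℝ) i) hid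
  simp only [ContinuousLinearMap.proj_apply] at h1
  have := integral_map (μ := gam ι) (φ := Function.eval i) (f := fun x : ℝ => x)
    (measurable_pi_apply i).aemeasurable (by fun_prop)
  rw [(measurePreserving_eval (fun _ : ι => gaussianReal 0 1) i).map_eq] at this
  simp only [Function.eval] at this
  rw [← this] at h1
  simpa using h1.symm

lemma abs_le_aux (a : ℝ) : a ≤ 1 + 1 * a ^ 2 := by nlinarith [sq_nonneg (a - 1)]

/-- covariance of the coordinates -/
lemma gam_cov (ι : Type) [Fintype ι] [DecidableEq ι] (i j : ι) :
    ∫ y, y i * y j ∂(gam ι) = if i = j then 1 else 0 := by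
  have hm : ∀ k, (gam ι).map (Function.eval k) = gaussianReal 0 1 := fun k =>
    (measurePreserving_eval (fun _ : ι => gaussianReal 0 1) k).map_eq
  have h0 : ∀ k, ∫ y, y k ∂(gam ι) = 0 := by
    intro k
    have := integral_map (μ := gam ι) (φ := Function.eval k) (f := fun x : ℝ => x)
      (measurable_pi_apply k).aemeasurable (by fun_prop)
    rw [hm] at this
    simpa using this.symm
  split_ifs with hij
  · subst hij
    have := integral_map (μ := gam ι) (φ := Function.eval i) (f := fun x : ℝ => x * x)
      (measurable_pi_apply i).aemeasurable (by fun_prop)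
    rw [hm] at this
    have hv : Var[fun x : ℝ => x; gaussianReal 0 1] = 1 := by simp
    rw [variance_eq_integral (by fun_prop)] at hv
    simp only [integral_id_gaussianReal, sub_zero] at hv
    simp only [Function.eval] at this
    rw [← this, ← hv]
    simp [sq]
  · have hind : iIndepFun (fun (k : ι) (y : ι → ℝ) => y k) (gam ι) :=
      iIndepFun_pi (X := fun _ => id) (fun _ => by fun_prop)
    have := (hind.indepFun hij).integral_fun_mul_eq_mul_integral
      (continuous_apply i).aestronglyMeasurable (continuous_apply j).aestronglyMeasurable
    rw [this, h0, h0]; simp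

lemma lin_bound {ι : Type} [Fintype ι] (D y : ι → ℝ) (C : ℝ) (hD : ∀ i, |D i| ≤ C) (hC : 0 ≤ C) :
    |∑ i, D i * y i| ≤ (Fintype.card ι * C) * ‖y‖ := by
  calc |∑ i, D i * y i| ≤ ∑ i, |D i * y i| := Finset.abs_sum_le_sum_abs _ _
    _ ≤ ∑ i : ι, C * ‖y‖ := Finset.sum_le_sum fun i _ => by
        rw [abs_mul]; exact mul_le_mul (hD i) (norm_le_pi_norm y i) (abs_nonneg _) hC
    _ = _ := by simp [mul_assoc]

/-- `E (∇f(X)·Y)^2 = E |∇f(X)|^2`. -/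
lemma second_moment (ι : Type) [Fintype ι] (D : (ι → ℝ) → ι → ℝ)
    (hDc : ∀ i, Continuous fun x => D x i) (C : ℝ) (hC : 0 ≤ C) (hD : ∀ x i, |D x i| ≤ C) :
    ∫ z, (∑ i, D z.1 i * z.2 i) ^ 2 ∂((gam ι).prod (gam ι)) = ∫ x, ∑ i, D x i ^ 2 ∂(gam ι) := by
  classical
  have hint : ∀ i j, Integrable (fun z : (ι → ℝ) × (ι → ℝ) => (D z.1 i * D z.1 j) * (z.2 i * z.2 j))
      ((gam ι).prod (gam ι)) := by
    intro i j
    have h1 : Integrable (fun x => D x i * D x j) (gam ι) := by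
      refine gauss_integrable _ _ ((hDc i).mul (hDc j)) (C * C) 0 fun x => ?_
      rw [abs_mul, zero_mul, add_zero]
      exact mul_le_mul (hD x i) (hD x j) (abs_nonneg _) hC
    have h2 : Integrable (fun y : ι → ℝ => y i * y j) (gam ι) := by
      refine gauss_integrable _ _ (by fun_prop) 0 1 fun x => ?_
      rw [abs_mul, zero_add, one_mul, sq]
      exact mul_le_mul (norm_le_pi_norm x i) (norm_le_pi_norm x j) (abs_nonneg _) (norm_nonneg _)
    exact h1.mul_prod h2
  have e1 : ∀ z : (ι → ℝ) × (ι → ℝ), (∑ i, D z.1 i * z.2 i) ^ 2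
      = ∑ i, ∑ j, (D z.1 i * D z.1 j) * (z.2 i * z.2 j) := by
    intro z
    rw [sq, Finset.sum_mul_sum]
    refine Finset.sum_congr rfl fun i _ => Finset.sum_congr rfl fun j _ => by ring
  simp_rw [e1]
  rw [integral_finsetSum _ fun i _ => integrable_finsetSum _ fun j _ => hint i j]
  rw [integral_finsetSum]
  swap
  · intro i _
    refine gauss_integrable _ _ ((hDc i).pow 2) (C ^ 2) 0 fun x => ?_
    rw [abs_pow, zero_mul, add_zero]
    exact pow_le_pow_left₀ (abs_nonneg _) (hD x i) 2
  refine Finset.sum_congr rfl fun i _ => ?_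
  rw [integral_finsetSum _ fun j _ => hint i j]
  have : ∀ j, ∫ z : (ι → ℝ) × (ι → ℝ), (D z.1 i * D z.1 j) * (z.2 i * z.2 j) ∂((gam ι).prod (gam ι))
      = (∫ x, D x i * D x j ∂(gam ι)) * (if i = j then 1 else 0) := by
    intro j
    rw [← gam_cov]
    exact integral_prod_mul (fun x => D x i * D x j) (fun y : ι → ℝ => y i * y j)
  simp_rw [this]
  simp [sq]

lemma interval_cs (u : ℝ → ℝ) (hu : Continuous u) (T : ℝ) (hT : 0 < T) :
    (∫ t in (0:ℝ)..T, u t) ^ 2 ≤ T * ∫ t in (0:ℝ)..T, u t ^ 2 := by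
  set m := (∫ t in (0:ℝ)..T, u t) with hm
  have h : 0 ≤ ∫ t in (0:ℝ)..T, (u t - m / T) ^ 2 :=
    intervalIntegral.integral_nonneg hT.le fun t _ => sq_nonneg _
  have e : ∫ t in (0:ℝ)..T, (u t - m / T) ^ 2
      = (∫ t in (0:ℝ)..T, u t ^ 2) - 2 * (m / T) * m + (m / T) ^ 2 * T := by
    have : ∀ t, (u t - m / T) ^ 2 = u t ^ 2 - 2 * (m / T) * u t + (m / T) ^ 2 := fun t => by ring
    simp_rw [this]
    rw [intervalIntegral.integral_add, intervalIntegral.integral_sub,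
      intervalIntegral.integral_const_mul, ← hm]
    · simp; ring
    all_goals apply Continuous.intervalIntegrable; fun_prop
  rw [e] at h
  have : (∫ t in (0:ℝ)..T, u t ^ 2) - 2 * (m / T) * m + (m / T) ^ 2 * T
      = (∫ t in (0:ℝ)..T, u t ^ 2) - m ^ 2 / T := by field_simp; ring
  rw [this, sub_nonneg, div_le_iff₀ hT] at h
  linarith

set_option maxHeartbeats 1600000 in
/-- Gaussian Poincaré inequality with a slightly worse constant (Maurey–Pisier). -/
lemma poincare (ι : Type) [Fintype ι] (f : (ι → ℝ) → ℝ) (D : (ι → ℝ) → ι → ℝ)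
    (hf : Continuous f)
    (hDc : ∀ i, Continuous fun x => D x i) (C : ℝ) (hC : 0 ≤ C) (hD : ∀ x i, |D x i| ≤ C)
    (hfb : ∃ A B, ∀ x, |f x| ≤ A + B * ‖x‖)
    (hder : ∀ x y : ι → ℝ, ∀ t : ℝ, HasDerivAt (fun t => f (Real.cos t • x + Real.sin t • y))
      (∑ i, D (Real.cos t • x + Real.sin t • y) i * (-Real.sin t • x + Real.cos t • y) i) t) :
    ∫ x, (f x - ∫ x', f x' ∂(gam ι)) ^ 2 ∂(gam ι)
      ≤ Real.pi ^ 2 / 8 * ∫ x, ∑ i, D x i ^ 2 ∂(gam ι) := by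
  have hpi := Real.pi_pos
  obtain ⟨A, B, hAB⟩ := hfb
  set μ := (gam ι).prod (gam ι) with hμ
  obtain ⟨u, hu⟩ : ∃ u : (ι → ℝ) × (ι → ℝ) → ℝ → ℝ, ∀ z t, u z t =
    ∑ i, D (Real.cos t • z.1 + Real.sin t • z.2) i * (-Real.sin t • z.1 + Real.cos t • z.2) i :=
    ⟨_, fun z t => rfl⟩
  have huc : Continuous (fun w : ((ι → ℝ) × (ι → ℝ)) × ℝ => u w.1 w.2) := by
    simp_rw [hu]
    refine continuous_finsetSum _ fun i _ => ?_
    refine Continuous.mul ((hDc i).comp (by fun_prop)) ?_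
    refine (continuous_apply i).comp ?_
    fun_prop
  have hpath : ∀ z : (ι → ℝ) × (ι → ℝ), (f z.2 - f z.1) ^ 2
      ≤ Real.pi / 2 * ∫ t in (0:ℝ)..(Real.pi / 2), u z t ^ 2 := by
    intro z
    have hc : Continuous (u z) := 
      huc.comp (Continuous.prodMk (continuous_const (y := z)) continuous_id)
    have := intervalIntegral.integral_eq_sub_of_hasDerivAt (a := 0) (b := Real.pi / 2)
      (f' := u z) (fun t _ => by rw [hu]; exact hder z.1 z.2 t) (hc.intervalIntegrable _ _)
    simp at this
    rw [← this]
    exact interval_cs (u z) hc (Real.pi / 2) (by positivity)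
  -- square integrability
  have hf2 : Integrable (fun x => f x ^ 2) (gam ι) := by
    refine gauss_integrable _ _ (hf.pow 2) (2 * A ^ 2) (2 * B ^ 2) fun x => ?_
    rw [abs_pow]
    calc |f x| ^ 2 ≤ (A + B * ‖x‖) ^ 2 := pow_le_pow_left₀ (abs_nonneg _) (hAB x) 2
      _ ≤ _ := by nlinarith [sq_nonneg (A - B * ‖x‖)]
  have hfm : MemLp f 2 (gam ι) := (memLp_two_iff_integrable_sq hf.aestronglyMeasurable).2 hf2
  have hf1 : Integrable f (gam ι) := hfm.integrable (by norm_num)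
  have hvar : ∫ z, (f z.2 - f z.1) ^ 2 ∂μ
      = 2 * ∫ x, (f x - ∫ x', f x' ∂(gam ι)) ^ 2 ∂(gam ι) := by
    set m := ∫ x', f x' ∂(gam ι) with hm
    have e1 : ∫ z, (f z.2 - f z.1) ^ 2 ∂μ = 2 * (∫ x, f x ^ 2 ∂(gam ι)) - 2 * m ^ 2 := by
      have : ∀ z : (ι → ℝ) × (ι → ℝ), (f z.2 - f z.1) ^ 2
        = f z.2 ^ 2 + f z.1 ^ 2 - 2 * (f z.1 * f z.2) := fun z => by ring
      simp_rw [this]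
      have i1 : Integrable (fun z : (ι → ℝ) × (ι → ℝ) => f z.1 ^ 2) μ := hf2.comp_fst (gam ι)
      have i2 : Integrable (fun z : (ι → ℝ) × (ι → ℝ) => f z.2 ^ 2) μ := hf2.comp_snd (gam ι)
      have i3 : Integrable (fun z : (ι → ℝ) × (ι → ℝ) => f z.1 * f z.2) μ := hf1.mul_prod hf1
      rw [integral_sub (show Integrable (fun z : (ι → ℝ) × (ι → ℝ) => f z.2 ^ 2 + f z.1 ^ 2) μ from
        i2.add i1) (i3.const_mul 2), integral_add i2 i1, integral_const_mul]
      have j1 : ∫ z : (ι → ℝ) × (ι → ℝ), f z.1 ^ 2 ∂μ = ∫ x, f x ^ 2 ∂(gam ι) := by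
        simpa using integral_fun_fst (μ := gam ι) (ν := gam ι) (fun x => f x ^ 2)
      have j2 : ∫ z : (ι → ℝ) × (ι → ℝ), f z.2 ^ 2 ∂μ = ∫ x, f x ^ 2 ∂(gam ι) := by
        simpa using integral_fun_snd (μ := gam ι) (ν := gam ι) (fun x => f x ^ 2)
      have j3 : ∫ z : (ι → ℝ) × (ι → ℝ), f z.1 * f z.2 ∂μ = m * m :=
        integral_prod_mul f f
      rw [j1, j2, j3]; ring
    have e2 : ∫ x, (f x - m) ^ 2 ∂(gam ι) = (∫ x, f x ^ 2 ∂(gam ι)) - m ^ 2 := by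
      have : ∀ x, (f x - m) ^ 2 = f x ^ 2 - 2 * m * f x + m ^ 2 := fun x => by ring
      simp_rw [this]
      rw [integral_add (show Integrable (fun x => f x ^ 2 - 2 * m * f x) (gam ι) from
        hf2.sub (hf1.const_mul _)) (integrable_const _),
        integral_sub hf2 (hf1.const_mul _), integral_const_mul, ← hm]
      simp; ring
    rw [e1, e2]; ring
  -- bound on u
  have hub : ∀ z t, u z t ^ 2 ≤ (Fintype.card ι * C) ^ 2 * (4 * ‖z‖ ^ 2) := by
    intro z t
    have h1 := lin_bound (D (Real.cos t • z.1 + Real.sin t • z.2))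
      (-Real.sin t • z.1 + Real.cos t • z.2) C (hD _) hC
    have h2 : ‖-Real.sin t • z.1 + Real.cos t • z.2‖ ≤ 2 * ‖z‖ := by
      calc _ ≤ ‖-Real.sin t • z.1‖ + ‖Real.cos t • z.2‖ := norm_add_le _ _
        _ ≤ 1 * ‖z‖ + 1 * ‖z‖ := by
          rw [norm_smul, norm_smul]
          gcongr
          · simpa using Real.abs_sin_le_one t
          · exact norm_fst_le z
          · exact Real.abs_cos_le_one t
          · exact norm_snd_le z
        _ = _ := by ring
    have h3 : |u z t| ≤ (Fintype.card ι * C) * (2 * ‖z‖) := by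
      rw [hu]
      exact h1.trans (mul_le_mul_of_nonneg_left h2 (by positivity))
    calc u z t ^ 2 = |u z t| ^ 2 := (sq_abs _).symm
      _ ≤ ((Fintype.card ι * C) * (2 * ‖z‖)) ^ 2 := pow_le_pow_left₀ (abs_nonneg _) h3 2
      _ = _ := by ring
  have hzint : Integrable (fun z : (ι → ℝ) × (ι → ℝ) =>
      (Fintype.card ι * C) ^ 2 * (4 * ‖z‖ ^ 2)) μ := by
    refine gauss_integrable _ _ (by fun_prop) 0 ((Fintype.card ι * C) ^ 2 * 4) fun z => ?_
    rw [abs_of_nonneg (by positivity)]; apply le_of_eq; ring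
  have hF : Integrable (Function.uncurry fun z t => u z t ^ 2)
      (μ.prod (volume.restrict (Set.Ioc 0 (Real.pi / 2)))) := by
    refine (hzint.comp_fst (volume.restrict (Set.Ioc 0 (Real.pi / 2)))).mono'
      (huc.pow 2).aestronglyMeasurable ?_
    refine Filter.Eventually.of_forall fun w => ?_
    simp only [Function.uncurry, Real.norm_eq_abs, abs_pow, sq_abs]
    exact hub w.1 w.2
  -- rotation invariance
  have hrot : ∀ t, ∫ z, u z t ^ 2 ∂μ = ∫ x, ∑ i, D x i ^ 2 ∂(gam ι) := by
    intro t
    simp_rw [hu]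
    rw [← second_moment ι D hDc C hC hD]
    conv_rhs => rw [← gam_rotation ι t]
    rw [integral_map (by fun_prop)]
    · rfl
    · refine Continuous.aestronglyMeasurable ?_
      refine (continuous_finsetSum _ fun i _ => ?_).pow 2
      exact ((hDc i).comp continuous_fst).mul (by fun_prop)
  have hmain : ∫ z, (f z.2 - f z.1) ^ 2 ∂μ
      ≤ ∫ z, (Real.pi / 2 * ∫ t in (0:ℝ)..(Real.pi / 2), u z t ^ 2) ∂μ := by
    have hi : Integrable (fun z => Real.pi / 2 * ∫ t in (0:ℝ)..(Real.pi / 2), u z t ^ 2) μ := by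
      refine Integrable.const_mul ?_ _
      simp_rw [intervalIntegral.integral_of_le (by positivity : (0:ℝ) ≤ Real.pi / 2)]
      exact hF.integral_prod_left
    exact integral_mono_of_nonneg (Filter.Eventually.of_forall fun z => sq_nonneg _) hi
      (Filter.Eventually.of_forall hpath)
  rw [hvar, integral_const_mul] at hmain
  simp_rw [intervalIntegral.integral_of_le (by positivity : (0:ℝ) ≤ Real.pi / 2)] at hmain
  rw [integral_integral_swap hF] at hmain
  simp_rw [hrot] at hmain
  simp only [integral_const, MeasurableSet.univ, measureReal_restrict_apply, Set.univ_inter,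
    Real.volume_real_Ioc, sub_zero, smul_eq_mul] at hmain
  rw [max_eq_left (by positivity)] at hmain
  nlinarith [hmain]

lemma stein_one (f f' : ℝ → ℝ) (A B : ℝ) (hf : ∀ x, HasDerivAt f (f' x) x)
    (hfc : Continuous f') (hA : ∀ x, |f x| ≤ A) (hB : ∀ x, |f' x| ≤ B) :
    ∫ x, x * f x ∂(gaussianReal 0 1) = ∫ x, f' x ∂(gaussianReal 0 1) := by
  have hfcont : Continuous f := continuous_iff_continuousAt.2 fun x => (hf x).continuousAt
  have hφ : ∀ x, HasDerivAt (gaussianPDFReal 0 1) (-x * gaussianPDFReal 0 1 x) x := by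
    intro x
    have h1 : HasDerivAt (fun x : ℝ => -(x - 0) ^ 2 / (2 * ((1 : NNReal) : ℝ))) (-x) x := by
      have := (((hasDerivAt_id x).sub_const 0).pow 2).neg.div_const (2 * ((1 : NNReal) : ℝ))
      refine this.congr_deriv ?_
      simp
      ring
    have h2 := (h1.exp).const_mul (√(2 * Real.pi * ((1 : NNReal) : ℝ)))⁻¹
    rw [gaussianPDFReal_def]
    refine h2.congr_deriv ?_
    ring
  have ix : Integrable (fun x => x * gaussianPDFReal 0 1 x) := by
    have := (integrable_mul_exp_neg_mul_sq (b := 1 / 2) (by norm_num)).const_mul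
      (√(2 * Real.pi * ((1 : NNReal) : ℝ)))⁻¹
    convert this using 2 with x
    rw [gaussianPDFReal_def]
    simp
    ring_nf
  have i0 : Integrable (gaussianPDFReal 0 1) := integrable_gaussianPDFReal 0 1
  have j1 : Integrable (f * fun x => -x * gaussianPDFReal 0 1 x) := by
    have := (ix.neg).bdd_mul (c := A) hfcont.aestronglyMeasurable (Filter.Eventually.of_forall hA)
    convert this using 2 with x
    simp
  have j2 : Integrable (f' * gaussianPDFReal 0 1) :=
    i0.bdd_mul (c := B) hfc.aestronglyMeasurable (Filter.Eventually.of_forall hB)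
  have j3 : Integrable (f * gaussianPDFReal 0 1) :=
    i0.bdd_mul (c := A) hfcont.aestronglyMeasurable (Filter.Eventually.of_forall hA)
  have key := integral_mul_deriv_eq_deriv_mul_of_integrable (u := f) (v := gaussianPDFReal 0 1)
    (fun x _ => hf x) (fun x _ => hφ x) j1 j2 j3
  rw [integral_gaussianReal_eq_integral_smul (by norm_num),
    integral_gaussianReal_eq_integral_smul (by norm_num)]
  simp only [smul_eq_mul]
  have e1 : ∀ x, gaussianPDFReal 0 1 x * (x * f x) = -(f x * (-x * gaussianPDFReal 0 1 x)) :=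
    fun x => by ring
  have e2 : ∀ x, gaussianPDFReal 0 1 x * f' x = f' x * gaussianPDFReal 0 1 x := fun x => by ring
  simp_rw [e1, e2]
  rw [integral_neg, key, neg_neg]

lemma gam_update (ι : Type) [Fintype ι] [DecidableEq ι] (i : ι) :
    ((gam ι).prod (gaussianReal 0 1)).map (fun z => Function.update z.1 i z.2) = gam ι := by
  have hm : Measurable (fun z : (ι → ℝ) × ℝ => Function.update z.1 i z.2) := by
    refine measurable_pi_iff.2 fun j => ?_
    by_cases hj : j = i
    · subst hj; simpa using measurable_snd
    · simp only [Function.update_of_ne hj]; fun_prop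
  symm
  refine Measure.pi_eq fun s hs => ?_
  rw [Measure.map_apply hm (MeasurableSet.univ_pi hs)]
  have : (fun z : (ι → ℝ) × ℝ => Function.update z.1 i z.2) ⁻¹' (Set.univ.pi s)
      = (Set.univ.pi (Function.update s i Set.univ)) ×ˢ (s i) := by
    ext z
    simp only [Set.mem_preimage, Set.mem_pi, Set.mem_univ, true_implies, Set.mem_prod]
    constructor
    · intro h
      refine ⟨fun j => ?_, by simpa using h i⟩
      by_cases hj : j = i
      · subst hj; simp
      · simpa [Function.update_of_ne hj] using h j
    · rintro ⟨h1, h2⟩ j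
      by_cases hj : j = i
      · subst hj; simpa using h2
      · simpa [Function.update_of_ne hj] using h1 j
  rw [this, Measure.prod_prod, Measure.pi_pi]
  rw [← Finset.mul_prod_erase Finset.univ _ (Finset.mem_univ i),
    ← Finset.mul_prod_erase Finset.univ (fun j => gaussianReal 0 1 (s j)) (Finset.mem_univ i)]
  simp only [Function.update_self, measure_univ, one_mul]
  rw [mul_comm]
  congr 1
  refine Finset.prod_congr rfl fun j hj => ?_
  rw [Function.update_of_ne (Finset.ne_of_mem_erase hj)]

lemma stein (ι : Type) [Fintype ι] [DecidableEq ι] (i : ι) (f f' : (ι → ℝ) → ℝ) (A B : ℝ)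
    (hfc : Continuous f) (hfc' : Continuous f') (hA : ∀ x, |f x| ≤ A) (hB : ∀ x, |f' x| ≤ B)
    (hd : ∀ x y, HasDerivAt (fun y => f (Function.update x i y)) (f' (Function.update x i y)) y) :
    ∫ x, x i * f x ∂(gam ι) = ∫ x, f' x ∂(gam ι) := by
  have hc : Continuous (fun z : (ι → ℝ) × ℝ => Function.update z.1 i z.2) :=
    continuous_fst.update i continuous_snd
  have hA0 : 0 ≤ A := (abs_nonneg _).trans (hA 0)
  have i1 : Integrable (fun x : ι → ℝ => x i * f x) (gam ι) := by
    refine gauss_integrable _ _ (by fun_prop) A A fun x => ?_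
    rw [abs_mul]
    calc |x i| * |f x| ≤ ‖x‖ * A :=
          mul_le_mul (norm_le_pi_norm x i) (hA x) (abs_nonneg _) (norm_nonneg _)
      _ ≤ _ := by nlinarith [abs_le_aux ‖x‖]
  have i2 : Integrable f' (gam ι) := by
    refine gauss_integrable _ _ hfc' B 0 fun x => ?_
    simpa using hB x
  have L : ∀ F : (ι → ℝ) → ℝ, Continuous F → Integrable F (gam ι) → ∫ x, F x ∂(gam ι)
      = ∫ x, ∫ y, F (Function.update x i y) ∂(gaussianReal 0 1) ∂(gam ι) := by
    intro F hF hFi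
    conv_lhs => rw [← gam_update ι i]
    rw [integral_map hc.measurable.aemeasurable hF.aestronglyMeasurable]
    rw [← gam_update ι i] at hFi
    have := (integrable_map_measure hF.aestronglyMeasurable hc.measurable.aemeasurable).1 hFi
    exact integral_prod _ this
  rw [L _ (by fun_prop) i1, L _ hfc' i2]
  congr 1
  ext x
  simp only [Function.update_self]
  exact stein_one (fun y => f (Function.update x i y)) (fun y => f' (Function.update x i y)) A B
    (hd x) (hfc'.comp (continuous_const.update i continuous_id)) (fun _ => hA _) (fun _ => hB _)

section LSE

set_option linter.unusedSectionVars false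

variable {S : Type} [Fintype S] [Nonempty S]

lemma sumexp_pos (h : S → ℝ) : 0 < ∑ s, Real.exp (h s) :=
  Finset.sum_pos (fun s _ => Real.exp_pos _) Finset.univ_nonempty

lemma hasDerivAt_lse (h : S → ℝ → ℝ) (h' : S → ℝ) (t : ℝ) (hh : ∀ s, HasDerivAt (h s) (h' s) t) :
    HasDerivAt (fun t => Real.log (∑ s, Real.exp (h s t)))
      ((∑ s, h' s * Real.exp (h s t)) / ∑ s, Real.exp (h s t)) t := by
  have h1 : HasDerivAt (fun t => ∑ s, Real.exp (h s t)) (∑ s, Real.exp (h s t) * h' s) t :=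
    HasDerivAt.fun_sum fun s _ => (hh s).exp
  refine (h1.log (sumexp_pos fun s => h s t).ne').congr_deriv ?_
  simp_rw [mul_comm]

lemma hasDerivAt_gibbs (h : S → ℝ → ℝ) (h' w : S → ℝ) (t : ℝ)
    (hh : ∀ s, HasDerivAt (h s) (h' s) t) :
    HasDerivAt (fun t => (∑ s, w s * Real.exp (h s t)) / ∑ s, Real.exp (h s t))
      ((∑ s, (w s * h' s) * Real.exp (h s t)) / (∑ s, Real.exp (h s t))
        - (∑ s, w s * Real.exp (h s t)) / (∑ s, Real.exp (h s t))
          * ((∑ s, h' s * Real.exp (h s t)) / ∑ s, Real.exp (h s t))) t := by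
  have h1 : HasDerivAt (fun t => ∑ s, Real.exp (h s t)) (∑ s, h' s * Real.exp (h s t)) t := by
    refine (HasDerivAt.fun_sum fun s _ => (hh s).exp).congr_deriv ?_
    simp_rw [mul_comm]
  have h2 : HasDerivAt (fun t => ∑ s, w s * Real.exp (h s t))
      (∑ s, (w s * h' s) * Real.exp (h s t)) t := by
    refine (HasDerivAt.fun_sum fun s _ => ((hh s).exp).const_mul (w s)).congr_deriv ?_
    exact Finset.sum_congr rfl fun s _ => by ring
  have hpos := (sumexp_pos fun s => h s t).ne'
  refine (h2.div h1 hpos).congr_deriv ?_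
  field_simp

lemma gibbs_bound (h w : S → ℝ) (C : ℝ) (hw : ∀ s, |w s| ≤ C) :
    |(∑ s, w s * Real.exp (h s)) / ∑ s, Real.exp (h s)| ≤ C := by
  have hpos := sumexp_pos h
  rw [abs_div, abs_of_pos hpos, div_le_iff₀ hpos, Finset.mul_sum]
  refine (Finset.abs_sum_le_sum_abs _ _).trans (Finset.sum_le_sum fun s _ => ?_)
  rw [abs_mul, abs_of_pos (Real.exp_pos _)]
  exact mul_le_mul_of_nonneg_right (hw s) (Real.exp_pos _).le

variable {ι : Type} [Fintype ι]

/-- linear energy -/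
noncomputable def lh (v : S → ι → ℝ) (a : ℝ) (g : ι → ℝ) (s : S) : ℝ := a * ∑ i, g i * v s i

/-- log partition function -/
noncomputable def lG (v : S → ι → ℝ) (a : ℝ) (g : ι → ℝ) : ℝ :=
  Real.log (∑ s, Real.exp (lh v a g s))

/-- Gibbs average -/
noncomputable def lav (v : S → ι → ℝ) (a : ℝ) (g : ι → ℝ) (w : S → ℝ) : ℝ :=
  (∑ s, w s * Real.exp (lh v a g s)) / ∑ s, Real.exp (lh v a g s)

lemma lh_cont (v : S → ι → ℝ) (a : ℝ) (s : S) : Continuous fun g => lh v a g s := by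
  unfold lh; fun_prop

lemma lG_cont (v : S → ι → ℝ) (a : ℝ) : Continuous (lG v a) := by
  unfold lG
  refine Continuous.log ?_ fun g => (sumexp_pos _).ne'
  exact continuous_finsetSum _ fun s _ => Real.continuous_exp.comp (lh_cont v a s)

lemma lav_cont (v : S → ι → ℝ) (a : ℝ) (w : S → ℝ) : Continuous fun g => lav v a g w := by
  unfold lav
  refine Continuous.div ?_ ?_ fun g => (sumexp_pos _).ne'
  · exact continuous_finsetSum _ fun s _ =>
      continuous_const.mul (Real.continuous_exp.comp (lh_cont v a s))
  · exact continuous_finsetSum _ fun s _ => Real.continuous_exp.comp (lh_cont v a s)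

lemma lav_bound (v : S → ι → ℝ) (a : ℝ) (g : ι → ℝ) (w : S → ℝ) (C : ℝ) (hw : ∀ s, |w s| ≤ C) :
    |lav v a g w| ≤ C := gibbs_bound _ _ _ hw

lemma lav_sum (v : S → ι → ℝ) (a : ℝ) (g : ι → ℝ) (c : ι → ℝ) (k : ℝ) :
    lav v a g (fun s => k * ∑ i, c i * v s i) = ∑ i, (k * lav v a g (fun s => v s i)) * c i := by
  unfold lav
  rw [div_eq_mul_inv]
  simp_rw [div_eq_mul_inv, Finset.mul_sum, Finset.sum_mul]
  rw [Finset.sum_comm]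
  refine Finset.sum_congr rfl fun i _ => ?_
  rw [Finset.mul_sum, Finset.sum_mul]
  exact Finset.sum_congr rfl fun s _ => by ring

lemma lav_mul (v : S → ι → ℝ) (a : ℝ) (g : ι → ℝ) (k : ℝ) (w : S → ℝ) :
    lav v a g (fun s => k * w s) = k * lav v a g w := by
  unfold lav
  rw [mul_div_assoc', Finset.mul_sum]
  simp_rw [mul_assoc]

lemma lav_const (v : S → ι → ℝ) (a : ℝ) (g : ι → ℝ) (k : ℝ) :
    lav v a g (fun _ => k) = k := by
  unfold lav
  rw [← Finset.mul_sum, mul_div_cancel_right₀ _ (sumexp_pos _).ne']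

/-- derivative of the log partition function along a curve -/
lemma lG_curve (v : S → ι → ℝ) (a : ℝ) (c : ℝ → ι → ℝ) (c' : ι → ℝ) (t : ℝ)
    (hc : ∀ i, HasDerivAt (fun t => c t i) (c' i) t) :
    HasDerivAt (fun t => lG v a (c t)) (∑ i, (a * lav v a (c t) (fun s => v s i)) * c' i) t := by
  rw [← lav_sum]
  exact hasDerivAt_lse (fun s t => lh v a (c t) s) _ t fun s =>
    (HasDerivAt.fun_sum fun i _ => (hc i).mul_const (v s i)).const_mul a

lemma lG_bound (v : S → ι → ℝ) (hv : ∀ s i, |v s i| ≤ 1) (a : ℝ) (g : ι → ℝ) :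
    |lG v a g| ≤ |lG v a 0| + Fintype.card ι * |a| * ‖g‖ := by
  have hd : ∀ t ∈ (Set.univ : Set ℝ), HasDerivWithinAt (fun t : ℝ => lG v a (t • g))
      (∑ i, (a * lav v a (t • g) (fun s => v s i)) * g i) Set.univ t := fun t _ =>
    (lG_curve v a (fun t => t • g) g t fun i => by
      simpa using (hasDerivAt_id t).mul_const (g i)).hasDerivWithinAt
  have := Convex.norm_image_sub_le_of_norm_hasDerivWithin_le (C := Fintype.card ι * |a| * ‖g‖) hd
    (fun t _ => lin_bound _ g |a| (fun i => by
      rw [abs_mul]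
      exact mul_le_of_le_one_right (abs_nonneg _) (lav_bound _ _ _ _ _ fun s => hv s i))
      (abs_nonneg a))
    convex_univ (Set.mem_univ 0) (Set.mem_univ 1)
  simp only [one_smul, zero_smul, sub_zero, norm_one, mul_one, Real.norm_eq_abs] at this
  have h2 := abs_sub_abs_le_abs_sub (lG v a g) (lG v a 0)
  linarith

/-- sum of squared magnetisations -/
noncomputable def lq (v : S → ι → ℝ) (a : ℝ) (g : ι → ℝ) : ℝ :=
  ∑ i, (lav v a g (fun s => v s i)) ^ 2

lemma lG_var (v : S → ι → ℝ) (hv : ∀ s i, |v s i| ≤ 1) (a : ℝ) :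
    ∫ g, (lG v a g - ∫ g', lG v a g' ∂(gam ι)) ^ 2 ∂(gam ι)
      ≤ Real.pi ^ 2 / 8 * (a ^ 2 * ∫ g, lq v a g ∂(gam ι)) := by
  have := poincare ι (lG v a) (fun g i => a * lav v a g (fun s => v s i)) (lG_cont v a)
    (fun i => continuous_const.mul (lav_cont v a _)) |a| (abs_nonneg _)
    (fun g i => by
      rw [abs_mul]
      exact mul_le_of_le_one_right (abs_nonneg _) (lav_bound _ _ _ _ _ fun s => hv s i))
    ⟨_, _, lG_bound v hv a⟩
    (fun x y t => lG_curve v a (fun t => Real.cos t • x + Real.sin t • y) _ t fun i => by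
      have := ((Real.hasDerivAt_cos t).mul_const (x i)).add ((Real.hasDerivAt_sin t).mul_const (y i))
      refine HasDerivAt.congr_deriv (f' := -Real.sin t * x i + Real.cos t * y i) this ?_
      simp)
  refine this.trans_eq ?_
  rw [← integral_const_mul (a ^ 2)]
  simp_rw [lq, Finset.mul_sum, mul_pow]

lemma lG_int (v : S → ι → ℝ) (hv : ∀ s i, |v s i| ≤ 1) (a : ℝ) : Integrable (lG v a) (gam ι) := by
  refine gauss_integrable _ _ (lG_cont v a) (|lG v a 0| + Fintype.card ι * |a|)
    (Fintype.card ι * |a|) fun g => (lG_bound v hv a g).trans ?_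
  have : 0 ≤ Fintype.card ι * |a| := by positivity
  nlinarith [abs_le_aux ‖g‖]

lemma lG_sq_int (v : S → ι → ℝ) (hv : ∀ s i, |v s i| ≤ 1) (a : ℝ) :
    Integrable (fun g => lG v a g ^ 2) (gam ι) := by
  refine gauss_integrable _ _ ((lG_cont v a).pow 2) (2 * |lG v a 0| ^ 2)
    (2 * (Fintype.card ι * |a|) ^ 2) fun x => ?_
  rw [abs_pow]
  calc |lG v a x| ^ 2 ≤ (|lG v a 0| + (Fintype.card ι * |a|) * ‖x‖) ^ 2 :=
        pow_le_pow_left₀ (abs_nonneg _) (lG_bound v hv a x) 2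
    _ ≤ _ := by nlinarith [sq_nonneg (|lG v a 0| - (Fintype.card ι * |a|) * ‖x‖)]

lemma lav_ibp (v : S → ι → ℝ) (hv : ∀ s i, v s i ^ 2 = 1) (hv1 : ∀ s i, |v s i| ≤ 1)
    (a : ℝ) (i : ι) :
    ∫ g, g i * lav v a g (fun s => v s i) ∂(gam ι)
      = ∫ g, a * (1 - lav v a g (fun s => v s i) ^ 2) ∂(gam ι) := by
  classical
  refine stein ι i _ _ 1 (|a| * 2) (lav_cont v a _)
    (continuous_const.mul (continuous_const.sub ((lav_cont v a _).pow 2)))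
    (fun g => lav_bound _ _ _ _ _ fun s => hv1 s i) (fun g => ?_) (fun x y => ?_)
  · rw [abs_mul]
    have h1 : |lav v a g (fun s => v s i)| ≤ 1 := lav_bound _ _ _ _ _ fun s => hv1 s i
    have h2 : lav v a g (fun s => v s i) ^ 2 ≤ 1 := (sq_le_one_iff_abs_le_one _).2 h1
    refine mul_le_mul_of_nonneg_left ?_ (abs_nonneg _)
    rw [abs_le]
    constructor <;> nlinarith [sq_nonneg (lav v a g (fun s => v s i))]
  · have hd : ∀ s, HasDerivAt (fun y => lh v a (Function.update x i y) s) (a * v s i) y := by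
      intro s
      have h1 : HasDerivAt (fun y : ℝ => ∑ j, Function.update x i y j * v s j)
          (∑ j, (if j = i then 1 else 0) * v s j) y := by
        refine HasDerivAt.fun_sum fun j _ => HasDerivAt.mul_const ?_ _
        by_cases hj : j = i
        · subst hj; simpa using hasDerivAt_id' y
        · simp only [Function.update_of_ne hj, hj, if_false]; exact hasDerivAt_const _ _
      simpa [lh] using h1.const_mul a
    refine (hasDerivAt_gibbs (fun s y => lh v a (Function.update x i y) s) _ (fun s => v s i) y
      hd).congr_deriv ?_
    change lav v a (Function.update x i y) (fun s => v s i * (a * v s i))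
      - lav v a (Function.update x i y) (fun s => v s i)
        * lav v a (Function.update x i y) (fun s => a * v s i) = _
    have : (fun s => v s i * (a * v s i)) = fun _ => a := by
      ext s
      linear_combination a * hv s i
    rw [this, lav_mul, lav_const]
    ring

lemma lG_mean_deriv (v : S → ι → ℝ) (hv : ∀ s i, v s i ^ 2 = 1) (hv1 : ∀ s i, |v s i| ≤ 1)
    (a : ℝ) :
    HasDerivAt (fun a => ∫ g, lG v a g ∂(gam ι))
      (a * (Fintype.card ι - ∫ g, lq v a g ∂(gam ι))) a := by
  have hlin : ∀ a g, lav v a g (fun s => ∑ i, g i * v s i)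
      = ∑ i, lav v a g (fun s => v s i) * g i := by
    intro a g
    simpa using lav_sum v a g g 1
  have hb : ∀ a g, |lav v a g (fun s => ∑ i, g i * v s i)| ≤ Fintype.card ι * 1 * ‖g‖ := by
    intro a g
    rw [hlin]
    exact lin_bound _ g 1 (fun i => lav_bound _ _ _ _ _ fun s => hv1 s i) zero_le_one
  have hmeas : Continuous fun g => lav v a g (fun s => ∑ i, g i * v s i) := by
    simp_rw [hlin]
    exact continuous_finsetSum _ fun i _ => (lav_cont v a _).mul (continuous_apply i)
  have hd := (hasDerivAt_integral_of_dominated_loc_of_deriv_le (μ := gam ι)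
    (F := fun a g => lG v a g) (F' := fun a g => lav v a g (fun s => ∑ i, g i * v s i))
    (x₀ := a) (s := Set.univ) (bound := fun g => Fintype.card ι * 1 * ‖g‖)
    Filter.univ_mem
    (Filter.Eventually.of_forall fun a => (lG_cont v a).aestronglyMeasurable)
    (lG_int v hv1 a) hmeas.aestronglyMeasurable
    (Filter.Eventually.of_forall fun g a _ => hb a g)
    (by
      refine Integrable.const_mul ?_ _
      refine gauss_integrable _ _ (by fun_prop) 1 1 fun x => ?_
      rw [abs_norm]; exact abs_le_aux _)
    (Filter.Eventually.of_forall fun g a _ => by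
      refine hasDerivAt_lse (fun s a => lh v a g s) (fun s => ∑ i, g i * v s i) a fun s => ?_
      simpa [lh] using (hasDerivAt_id' a).mul_const (∑ i, g i * v s i))).2
  refine hd.congr_deriv ?_
  simp_rw [hlin]
  have hbi : ∀ g i, |lav v a g (fun s => v s i)| ≤ 1 := fun g i =>
    lav_bound _ _ _ _ _ fun s => hv1 s i
  have hsq : ∀ i, Integrable (fun g => lav v a g (fun s => v s i) ^ 2) (gam ι) := fun i => by
    refine gauss_integrable _ _ ((lav_cont v a _).pow 2) 1 0 fun g => ?_
    rw [abs_pow]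
    rw [zero_mul, add_zero]
    exact pow_le_one₀ (abs_nonneg _) (hbi g i)
  rw [integral_finsetSum]
  swap
  · intro i _
    refine gauss_integrable _ _ ((lav_cont v a _).mul (continuous_apply i)) 1 1 fun g => ?_
    rw [abs_mul]
    refine le_trans ?_ (abs_le_aux _)
    exact (mul_le_mul (hbi g i) (norm_le_pi_norm g i) (abs_nonneg _) zero_le_one).trans_eq
      (one_mul _)
  have e : ∀ i, ∫ g, lav v a g (fun s => v s i) * g i ∂(gam ι)
      = a * (1 - ∫ g, lav v a g (fun s => v s i) ^ 2 ∂(gam ι)) := by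
    intro i
    have := lav_ibp v hv hv1 a i
    simp_rw [mul_comm (lav v a _ _)]
    rw [this, integral_const_mul, integral_sub (integrable_const _) (hsq i)]
    simp
  simp_rw [e]
  unfold lq
  rw [integral_finsetSum _ fun i _ => hsq i, ← Finset.mul_sum]
  simp

/-- The abstract second-moment bound. -/
lemma lG_second_moment (v : S → ι → ℝ) (hv : ∀ s i, v s i ^ 2 = 1) (a Q : ℝ) (ha : 0 ≤ a)
    (hQ : ∀ x ∈ Set.Icc 0 a, ∫ g, lq v x g ∂(gam ι) ≤ Q) :
    Integrable (fun g => (lG v a g - (Real.log (Fintype.card S) + a ^ 2 / 2 * Fintype.card ι)) ^ 2)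
      (gam ι) ∧
    ∫ g, (lG v a g - (Real.log (Fintype.card S) + a ^ 2 / 2 * Fintype.card ι)) ^ 2 ∂(gam ι)
      ≤ Real.pi ^ 2 / 8 * (a ^ 2 * Q) + (a ^ 2 * Q) ^ 2 := by
  have hv1 : ∀ s i, |v s i| ≤ 1 := fun s i => (sq_le_one_iff_abs_le_one _).1 (hv s i).le
  have hq0 : ∀ x, 0 ≤ ∫ g, lq v x g ∂(gam ι) := fun x =>
    integral_nonneg fun g => Finset.sum_nonneg fun i _ => sq_nonneg _
  have hQ0 : 0 ≤ Q := (hq0 0).trans (hQ 0 ⟨le_rfl, ha⟩)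
  set M := ∫ g, lG v a g ∂(gam ι) with hM
  set c := Real.log (Fintype.card S) + a ^ 2 / 2 * Fintype.card ι with hc
  have hbias : |M - c| ≤ a ^ 2 * Q := by
    have hd : ∀ x ∈ Set.Icc 0 a, HasDerivWithinAt
        (fun x => (∫ g, lG v x g ∂(gam ι)) - x ^ 2 / 2 * Fintype.card ι)
        (-(x * ∫ g, lq v x g ∂(gam ι))) (Set.Icc 0 a) x := by
      intro x _
      refine HasDerivAt.hasDerivWithinAt ?_
      refine ((lG_mean_deriv v hv hv1 x).sub
        (((hasDerivAt_pow 2 x).div_const 2).mul_const (Fintype.card ι : ℝ))).congr_deriv ?_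
      simp; ring
    have := Convex.norm_image_sub_le_of_norm_hasDerivWithin_le (C := a * Q) hd
      (fun x hx => by
        rw [norm_neg, Real.norm_eq_abs, abs_of_nonneg (mul_nonneg hx.1 (hq0 x))]
        exact mul_le_mul hx.2 (hQ x hx) (hq0 x) ha)
      (convex_Icc 0 a) (Set.left_mem_Icc.2 ha) (Set.right_mem_Icc.2 ha)
    have h0 : ∫ g, lG v 0 g ∂(gam ι) = Real.log (Fintype.card S) := by
      simp [lG, lh]
    rw [h0, ← hM] at this
    simp only [Real.norm_eq_abs, sub_zero, abs_of_nonneg ha] at this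
    calc |M - c| = |M - a ^ 2 / 2 * Fintype.card ι
          - (Real.log (Fintype.card S) - 0 ^ 2 / 2 * Fintype.card ι)| := by
          rw [hc]; congr 1; ring
      _ ≤ a * Q * a := this
      _ = _ := by ring
  have i1 := lG_int v hv1 a
  have i2 := lG_sq_int v hv1 a
  have hexp : ∀ d : ℝ, Integrable (fun g => (lG v a g - d) ^ 2) (gam ι) ∧
      ∫ g, (lG v a g - d) ^ 2 ∂(gam ι) = (∫ g, lG v a g ^ 2 ∂(gam ι)) - 2 * d * M + d ^ 2 := by
    intro d
    have : ∀ g, (lG v a g - d) ^ 2 = lG v a g ^ 2 - 2 * d * lG v a g + d ^ 2 := fun x => by ring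
    simp_rw [this]
    have i3 : Integrable (fun g => lG v a g ^ 2 - 2 * d * lG v a g) (gam ι) :=
      i2.sub (i1.const_mul _)
    refine ⟨i3.add (integrable_const _), ?_⟩
    rw [integral_add i3 (integrable_const _), integral_sub i2 (i1.const_mul _),
      integral_const_mul]
    simp [hM]
  refine ⟨(hexp c).1, ?_⟩
  have hvar := lG_var v hv1 a
  rw [← hM, (hexp M).2] at hvar
  rw [(hexp c).2]
  have hb2 : (M - c) ^ 2 ≤ (a ^ 2 * Q) ^ 2 := by
    rw [← sq_abs]; exact pow_le_pow_left₀ (abs_nonneg _) hbias 2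
  have hq : Real.pi ^ 2 / 8 * (a ^ 2 * ∫ g, lq v a g ∂(gam ι)) ≤ Real.pi ^ 2 / 8 * (a ^ 2 * Q) := by
    have := hQ a ⟨ha, le_rfl⟩
    gcongr
  nlinarith

end LSE

/-- spin products -/
noncomputable def vv (N p : ℕ) (s : Fin N → Bool) (i : Fin p → Fin N) : ℝ := ∏ j, spin s (i j)

lemma vv_sq (N p : ℕ) (s : Fin N → Bool) (i : Fin p → Fin N) : vv N p s i ^ 2 = 1 := by
  unfold vv
  rw [← Finset.prod_pow]
  refine Finset.prod_eq_one fun j _ => ?_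
  unfold spin
  split_ifs <;> norm_num

lemma ham_lh (N p : ℕ) (x : ℝ) (g : (Fin p → Fin N) → ℝ) (s : Fin N → Bool) :
    x * ham N p g s = lh (vv N p) (x / (N:ℝ) ^ (((p:ℝ) - 1) / 2)) g s := by
  unfold ham lh vv
  ring

lemma vv_overlap (N p : ℕ) (hN : 1 ≤ N) (s t : Fin N → Bool) :
    ∑ i, vv N p s i * vv N p t i = (N:ℝ) ^ p * overlap s t ^ p := by
  have hN0 : (N:ℝ) ≠ 0 := by positivity
  rw [← mul_pow, overlap, mul_div_cancel₀ _ hN0, Fintype.sum_pow]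
  simp_rw [vv, Finset.prod_mul_distrib]

lemma lq_eq (N p : ℕ) (hN : 1 ≤ N) (a : ℝ) (g : (Fin p → Fin N) → ℝ) :
    lq (vv N p) a g = (N:ℝ) ^ p * ((∑ s1 : Fin N → Bool, ∑ s2 : Fin N → Bool,
        Real.exp (lh (vv N p) a g s1) * Real.exp (lh (vv N p) a g s2) * overlap s1 s2 ^ p)
        / (∑ s, Real.exp (lh (vv N p) a g s)) ^ 2) := by
  unfold lq lav
  simp_rw [div_pow]
  rw [← Finset.sum_div, mul_div_assoc']
  congr 1
  simp_rw [sq, Finset.sum_mul_sum]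
  rw [Finset.sum_comm, Finset.mul_sum]
  refine Finset.sum_congr rfl fun s _ => ?_
  rw [Finset.sum_comm, Finset.mul_sum]
  refine Finset.sum_congr rfl fun t _ => ?_
  rw [mul_left_comm, ← vv_overlap N p hN, Finset.mul_sum]
  exact Finset.sum_congr rfl fun i _ => by ring

lemma gibbsW_bound {S : Type} [Fintype S] [Nonempty S] (h : S → ℝ) (w : S → S → ℝ) (C : ℝ)
    (hw : ∀ s t, |w s t| ≤ C) :
    |(∑ s, ∑ t, Real.exp (h s) * Real.exp (h t) * w s t) / (∑ s, Real.exp (h s)) ^ 2| ≤ C := by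
  have hpos := sumexp_pos h
  have hpos2 : 0 < (∑ s, Real.exp (h s)) ^ 2 := by positivity
  rw [abs_div, abs_of_pos hpos2, div_le_iff₀ hpos2, sq, Finset.sum_mul_sum, Finset.mul_sum]
  refine (Finset.abs_sum_le_sum_abs _ _).trans (Finset.sum_le_sum fun s _ => ?_)
  rw [Finset.mul_sum]
  refine (Finset.abs_sum_le_sum_abs _ _).trans (Finset.sum_le_sum fun t _ => ?_)
  rw [abs_mul, abs_of_pos (by positivity), mul_comm]
  exact mul_le_mul_of_nonneg_right (hw s t) (by positivity)

lemma lq_int_le (N p : ℕ) (hN : 1 ≤ N) (β : ℝ) :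
    ∫ g, lq (vv N p) (β / Real.sqrt 2 / (N:ℝ) ^ (((p:ℝ) - 1) / 2)) g ∂(gam (Fin p → Fin N))
      ≤ (N:ℝ) ^ p * gibbsAvgAbsRp N p β := by
  set a := β / Real.sqrt 2 / (N:ℝ) ^ (((p:ℝ) - 1) / 2) with ha
  unfold gibbsAvgAbsRp disorder
  simp_rw [ham_lh, ← ha]
  rw [← integral_const_mul]
  have hcont : ∀ w : (Fin N → Bool) → (Fin N → Bool) → ℝ, Continuous fun g =>
      (∑ s1 : Fin N → Bool, ∑ s2 : Fin N → Bool,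
        Real.exp (lh (vv N p) a g s1) * Real.exp (lh (vv N p) a g s2) * w s1 s2)
        / (∑ s, Real.exp (lh (vv N p) a g s)) ^ 2 := by
    intro w
    have he : ∀ s, Continuous fun g => Real.exp (lh (vv N p) a g s) := fun s =>
      Real.continuous_exp.comp (lh_cont (vv N p) a s)
    refine Continuous.div ?_ ((continuous_finsetSum _ fun s _ => he s).pow 2)
      fun g => (pow_pos (sumexp_pos _) 2).ne'
    exact continuous_finsetSum _ fun s _ => continuous_finsetSum _ fun t _ =>
      ((he s).mul (he t)).mul continuous_const
  obtain ⟨C, hC⟩ : ∃ C : ℝ, ∀ s t : Fin N → Bool, |(|overlap s t| ^ p)| ≤ C := by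
    obtain ⟨C, hC⟩ := Finite.exists_le
      (fun z : (Fin N → Bool) × (Fin N → Bool) => |(|overlap z.1 z.2| ^ p)|)
    exact ⟨C, fun s t => hC (s, t)⟩
  refine integral_mono_of_nonneg (Filter.Eventually.of_forall fun g =>
    Finset.sum_nonneg fun i _ => sq_nonneg _) ?_ (Filter.Eventually.of_forall fun g => ?_)
  · refine Integrable.const_mul ?_ _
    refine gauss_integrable (gam (Fin p → Fin N)) _ (hcont fun s t => |overlap s t| ^ p) C 0
      fun g => ?_
    rw [zero_mul, add_zero]
    exact gibbsW_bound _ _ C hC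
  · simp only []
    rw [lq_eq N p hN]
    refine mul_le_mul_of_nonneg_left ?_ (by positivity)
    refine div_le_div_of_nonneg_right ?_ (by positivity)
    refine Finset.sum_le_sum fun s _ => Finset.sum_le_sum fun t _ => ?_
    refine mul_le_mul_of_nonneg_left ?_ (by positivity)
    rw [← abs_pow]
    exact le_abs_self _

lemma freeEnergy_eq (N p : ℕ) (hN : 1 ≤ N) (β : ℝ) (g : (Fin p → Fin N) → ℝ) :
    (N:ℝ) * (freeEnergy N p β g - β ^ 2 / 4)
      = lG (vv N p) (β / Real.sqrt 2 / (N:ℝ) ^ (((p:ℝ) - 1) / 2)) g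
        - (Real.log (Fintype.card (Fin N → Bool)) + N * β ^ 2 / 4) := by
  have hN0 : (N:ℝ) ≠ 0 := by positivity
  unfold freeEnergy lG
  simp_rw [ham_lh]
  rw [← Finset.mul_sum, Real.log_mul (by positivity) (sumexp_pos _).ne']
  simp
  field_simp
  ring

/-- If `E⟨|R_{1,2}|^p⟩_β ≤ K/N^(p/2)` for all `N ≥ 1` and `β ∈ [0,b]`, then there is a
constant `K'` with `P(|F_N(β) - β²/4| ≥ r) ≤ K'/(r² N^(p/2+1))` for all such `β`,
all `r > 0` and all `N ≥ 1`. -/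
theorem stmt16 (p : ℕ) (hp : 3 ≤ p) (b K : ℝ) (hb : 0 < b) (hK : 0 ≤ K)
    (h : ∀ N : ℕ, 1 ≤ N → ∀ β ∈ Set.Icc (0:ℝ) b,
      gibbsAvgAbsRp N p β ≤ K / (N:ℝ) ^ ((p:ℝ) / 2)) :
    ∃ K' : ℝ, ∀ β ∈ Set.Icc (0:ℝ) b, ∀ r : ℝ, 0 < r → ∀ N : ℕ, 1 ≤ N →
      ((disorder N p) {g | r ≤ |freeEnergy N p β g - β ^ 2 / 4|}).toReal
        ≤ K' / (r ^ 2 * (N:ℝ) ^ ((p:ℝ) / 2 + 1)) := by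
  refine ⟨Real.pi ^ 2 / 16 * (b ^ 2 * K) + b ^ 4 * K ^ 2 / 4, ?_⟩
  intro β hβ r hr N hN
  have hN1 : (1:ℝ) ≤ N := by exact_mod_cast hN
  have hNpos : (0:ℝ) < N := by linarith
  have hp3 : (3:ℝ) ≤ p := by exact_mod_cast hp
  set X := (N:ℝ) ^ ((p:ℝ) / 2) with hX
  set c := (N:ℝ) ^ (((p:ℝ) - 1) / 2) with hc
  have hcpos : 0 < c := Real.rpow_pos_of_pos hNpos _
  have hXpos : 0 < X := Real.rpow_pos_of_pos hNpos _
  have hXN : (N:ℝ) ≤ X := by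
    calc (N:ℝ) = (N:ℝ) ^ (1:ℝ) := (Real.rpow_one _).symm
      _ ≤ X := Real.rpow_le_rpow_of_exponent_le hN1 (by linarith)
  have hX1 : (N:ℝ) ^ ((p:ℝ) / 2 + 1) = X * N := by
    rw [Real.rpow_add hNpos, Real.rpow_one]
  have hc2 : c ^ 2 * N = (N:ℝ) ^ p := by
    rw [← Real.rpow_natCast (N:ℝ) p, hc, ← Real.rpow_natCast, ← Real.rpow_mul hNpos.le]
    nth_rewrite 2 [← Real.rpow_one (N:ℝ)]
    rw [← Real.rpow_add hNpos]
    congr 1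
    push_cast
    ring
  have h2 : (0:ℝ) < Real.sqrt 2 := by positivity
  have h22 : Real.sqrt 2 ^ 2 = 2 := Real.sq_sqrt (by norm_num)
  set a := β / Real.sqrt 2 / c with ha
  have ha0 : 0 ≤ a := div_nonneg (div_nonneg hβ.1 h2.le) hcpos.le
  have ha2 : a ^ 2 * (N:ℝ) ^ p = β ^ 2 * N / 2 := by
    rw [ha, ← hc2, div_pow, div_pow, h22]
    field_simp
  have hQ : ∀ x ∈ Set.Icc 0 a, ∫ g, lq (vv N p) x g ∂(gam (Fin p → Fin N))
      ≤ (N:ℝ) ^ p * (K / X) := by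
    intro x hx
    have e : x = (x * c * Real.sqrt 2) / Real.sqrt 2 / c := by field_simp
    have hx2 : x * c * Real.sqrt 2 ≤ b := by
      have := hx.2
      rw [ha, le_div_iff₀ hcpos, le_div_iff₀ h2] at this
      exact this.trans hβ.2
    rw [e]
    refine (lq_int_le N p hN _).trans ?_
    refine mul_le_mul_of_nonneg_left (h N hN _ ⟨?_, hx2⟩) (by positivity)
    have := hx.1
    positivity
  obtain ⟨hint, hle⟩ := lG_second_moment (vv N p) (vv_sq N p) a _ ha0 hQ
  have hcard : a ^ 2 / 2 * (Fintype.card (Fin p → Fin N) : ℝ) = N * β ^ 2 / 4 := by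
    simp only [Fintype.card_fun, Fintype.card_fin, Nat.cast_pow]
    linear_combination ha2 / 2
  have haQ : a ^ 2 * ((N:ℝ) ^ p * (K / X)) = β ^ 2 * K / 2 * (N / X) := by
    rw [← mul_assoc, ha2]; ring
  have hE : ∀ g, (lG (vv N p) a g - (Real.log (Fintype.card (Fin N → Bool))
      + a ^ 2 / 2 * Fintype.card (Fin p → Fin N))) ^ 2
      = (N:ℝ) ^ 2 * (freeEnergy N p β g - β ^ 2 / 4) ^ 2 := by
    intro g
    rw [hcard, ← mul_pow, freeEnergy_eq N p hN]
  simp_rw [hE] at hint hle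
  rw [haQ] at hle
  have hmk := mul_meas_ge_le_integral_of_nonneg (μ := gam (Fin p → Fin N))
    (Filter.Eventually.of_forall fun g => by positivity) hint ((N:ℝ) ^ 2 * r ^ 2)
  have hset : {g | (N:ℝ) ^ 2 * r ^ 2 ≤ (N:ℝ) ^ 2 * (freeEnergy N p β g - β ^ 2 / 4) ^ 2}
      = {g | r ≤ |freeEnergy N p β g - β ^ 2 / 4|} := by
    ext g
    simp only [Set.mem_ofPred_eq]
    rw [mul_le_mul_iff_of_pos_left (by positivity), sq_le_sq, abs_of_pos hr]
  rw [hset] at hmk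
  change (gam (Fin p → Fin N)).real _ ≤ _
  set P := (gam (Fin p → Fin N)).real {g | r ≤ |freeEnergy N p β g - β ^ 2 / 4|}
  have hb2 : β ^ 2 ≤ b ^ 2 := pow_le_pow_left₀ hβ.1 hβ.2 2
  have hρ : (N:ℝ) / X ≤ 1 := (div_le_one hXpos).2 hXN
  have hρ0 : 0 ≤ (N:ℝ) / X := by positivity
  have hfin : (N:ℝ) ^ 2 * r ^ 2 * P
      ≤ (Real.pi ^ 2 / 16 * (b ^ 2 * K) + b ^ 4 * K ^ 2 / 4) * (N / X) := by
    refine (hmk.trans hle).trans ?_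
    have t1 : β ^ 2 * K / 2 * ((N:ℝ) / X) ≤ b ^ 2 * K / 2 * (N / X) := by gcongr
    calc Real.pi ^ 2 / 8 * (β ^ 2 * K / 2 * (N / X)) + (β ^ 2 * K / 2 * (N / X)) ^ 2
        ≤ Real.pi ^ 2 / 8 * (b ^ 2 * K / 2 * (N / X)) + (b ^ 2 * K / 2 * (N / X)) ^ 2 := by
          have := hβ.1
          gcongr
      _ = Real.pi ^ 2 / 16 * (b ^ 2 * K) * (N / X) + b ^ 4 * K ^ 2 / 4 * (N / X) * (N / X) := by
          ring
      _ ≤ Real.pi ^ 2 / 16 * (b ^ 2 * K) * (N / X) + b ^ 4 * K ^ 2 / 4 * (N / X) * 1 := by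
          gcongr
      _ = _ := by ring
  rw [hX1, le_div_iff₀ (by positivity)]
  have : P * (r ^ 2 * (X * N)) = (N:ℝ) ^ 2 * r ^ 2 * P * (X / N) := by field_simp
  rw [this]
  calc _ ≤ (Real.pi ^ 2 / 16 * (b ^ 2 * K) + b ^ 4 * K ^ 2 / 4) * (N / X) * (X / N) := by gcongr
    _ = _ := by field_simp
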